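/- Let k ≥ 3 and let G be an egr(n,k,g,λ) graph with g ≡ 0 (mod 4). Suppose c₁ and c are natural numbers such that for every vertex v of G the number of closed walks of length g/2 based at v equals c₁ and the number of cycle-free closed walks of length g based at v equals c. Then n·(c + kλ − c₁²) ≥ c + kλ + k^g − 2·c₁·k^{g/2}. -/

import Mathlib

/-!
A closed walk of length `g` that is not cycle-free traverses all `≥ g` edges of some cycle with only
`g` steps, so it is itself a `g`-cycle. Counting pairs (`g`-cycle through `v`, edge of it at `v`) in
two ways gives `kλ` such closed walks at `v`, hence `c + kλ` closed walks of length `g` in all.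

Let `B` be the power `g / 2` of the adjacency matrix. Its row at `v` has diagonal entry `c₁`,
sum `k ^ (g / 2)` and, as `B` is symmetric, sum of squares `(B * B) v v = c + kλ`. The bound is the
Cauchy–Schwarz inequality for the `n - 1` off-diagonal entries of that row.
-/

open SimpleGraph

/-- `G` is an edge-girth-regular graph with parameters `(n, k, g, lam)`:
a finite simple graph on `n` vertices, `k`-regular, of girth `g`, in which every
edge lies on exactly `lam` cycles of length `g` (each such cycle corresponds to
exactly two closed walks based at an endpoint of the edge and traversing it). -/
def SimpleGraph.IsEGR {V : Type*} (G : SimpleGraph V) (n k g lam : ℕ) : Prop :=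
  Finite V ∧ Nat.card V = n ∧
    (∀ v : V, (G.neighborSet v).ncard = k) ∧
    G.egirth = (g : ℕ∞) ∧
    ∀ u v : V, G.Adj u v →
      Nat.card {p : G.Walk u u // p.IsCycle ∧ p.length = g ∧ s(u, v) ∈ p.edges} = 2 * lam

/-- The number of closed walks of length `l` based at `v`. -/
noncomputable def SimpleGraph.closedWalkCount {V : Type*} (G : SimpleGraph V) (v : V) (l : ℕ) : ℕ :=
  Nat.card {p : G.Walk v v // p.length = l}

/-- The number of cycle-free closed walks of length `l` based at `v`,
i.e. closed walks whose traversed edges form an acyclic subgraph. -/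
noncomputable def SimpleGraph.cycleFreeClosedWalkCount {V : Type*} (G : SimpleGraph V) (v : V)
    (l : ℕ) : ℕ :=
  Nat.card {p : G.Walk v v // p.length = l ∧ p.toSubgraph.coe.IsAcyclic}

/-- The number of cycles of length `l` based at `v`, as closed walks: a cycle subgraph through `v`
is counted twice, once for each direction in which it can be traversed from `v`. -/
noncomputable def basedCycleCount {V : Type*} (G : SimpleGraph V) (v : V) (l : ℕ) : ℕ :=
  Nat.card {p : G.Walk v v // p.IsCycle ∧ p.length = l}

section CycleFree

variable {V : Type*} {G : SimpleGraph V} {u v : V}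

lemma isCycle_of_isCircuit_of_length_le_egirth {p : G.Walk v v} (hp : p.IsCircuit)
    (hlen : (p.length : ℕ∞) ≤ G.egirth) : p.IsCycle := by
  classical
  have hcycle : p.cycleBypass.IsCycle := hp.isCycle_cycleBypass
  have hle : p.length ≤ p.cycleBypass.length :=
    mod_cast hlen.trans (egirth_le_length hcycle)
  cases p with
  | nil => exact hcycle
  | cons h q =>
    simp only [Walk.cycleBypass, Walk.length_cons, add_le_add_iff_right] at hle hcycle
    rwa [Walk.bypass_eq_self_of_length_le_length_bypass q hle] at hcycle

lemma isCycle_of_edges_subset_of_length_le_egirth {p : G.Walk u u} {q : G.Walk v v}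
    (hq : q.IsCycle) (hsub : q.edges ⊆ p.edges) (hlen : (p.length : ℕ∞) ≤ G.egirth) :
    p.IsCycle := by
  have hle : p.length ≤ q.length := mod_cast hlen.trans (egirth_le_length hq)
  -- `q` has distinct edges, at least as many as `p` has steps, so they exhaust `p.edges`.
  have hperm : q.edges.Perm p.edges :=
    (hq.edges_nodup.subperm hsub).perm_of_length_le (by rwa [Walk.length_edges, Walk.length_edges])
  have hlength : q.length = p.length := by simpa only [Walk.length_edges] using hperm.length_eq
  have hne : p ≠ .nil := by
    rintro rfl
    exact absurd (hlength ▸ hq.three_le_length) (by simp)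
  exact isCycle_of_isCircuit_of_length_le_egirth
    ⟨⟨hperm.nodup_iff.1 hq.edges_nodup⟩, hne⟩ hlen

lemma exists_isCycle_of_not_isAcyclic_coe {H : G.Subgraph} (hH : ¬ H.coe.IsAcyclic) :
    ∃ (a : V) (q : G.Walk a a), q.IsCycle ∧ ∀ e ∈ q.edges, e ∈ H.edgeSet := by
  simp only [IsAcyclic, not_forall, not_not] at hH
  obtain ⟨a, q, hq⟩ := hH
  refine ⟨a, q.map H.hom, hq.map H.hom_injective, fun e he ↦ ?_⟩
  obtain ⟨⟨x, y⟩, hxy, rfl⟩ := List.mem_map.1 (q.edges_map H.hom ▸ he)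
  exact q.edges_subset_edgeSet hxy

lemma not_isAcyclic_toSubgraph_of_isCycle {p : G.Walk v v} (hp : p.IsCycle) :
    ¬ p.toSubgraph.coe.IsAcyclic := by
  intro hacyclic
  rw [← p.map_mapToSubgraph_hom] at hp
  exact hacyclic _ ((Walk.isCycle_map_iff_of_injective p.toSubgraph.hom_injective).1 hp)

lemma isAcyclic_toSubgraph_iff_not_isCycle {p : G.Walk v v} (hlen : (p.length : ℕ∞) ≤ G.egirth) :
    p.toSubgraph.coe.IsAcyclic ↔ ¬ p.IsCycle := by
  refine ⟨fun hacyclic hp ↦ not_isAcyclic_toSubgraph_of_isCycle hp hacyclic, fun hp ↦ ?_⟩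
  by_contra hacyclic
  obtain ⟨a, q, hq, hsub⟩ := exists_isCycle_of_not_isAcyclic_coe hacyclic
  exact hp (isCycle_of_edges_subset_of_length_le_egirth hq
    (fun e he ↦ p.mem_edges_toSubgraph.1 (hsub e he)) hlen)

end CycleFree

section LocallyFinite

variable {V : Type*} (G : SimpleGraph V) [G.LocallyFinite] (v : V)

lemma closedWalkCount_eq_card_finsetWalkLength [DecidableEq V] (l : ℕ) :
    G.closedWalkCount v l = (G.finsetWalkLength l v v).card :=
  Nat.subtype_card _ fun _ ↦ mem_finsetWalkLength_iff

lemma closedWalkCount_eq_cycleFree_add_basedCycleCount {l : ℕ} (hl : (l : ℕ∞) ≤ G.egirth) :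
    G.closedWalkCount v l = G.cycleFreeClosedWalkCount v l + basedCycleCount G v l := by
  classical
  have hcycle : basedCycleCount G v l = ((G.finsetWalkLength l v v).filter (·.IsCycle)).card :=
    Nat.subtype_card _ fun p ↦ by rw [Finset.mem_filter, mem_finsetWalkLength_iff, and_comm]
  have hfree : G.cycleFreeClosedWalkCount v l =
      ((G.finsetWalkLength l v v).filter (¬ ·.IsCycle)).card := by
    refine Nat.subtype_card _ fun p ↦ ?_
    rw [Finset.mem_filter, mem_finsetWalkLength_iff]
    exact and_congr_right fun hp ↦ (isAcyclic_toSubgraph_iff_not_isCycle (hp ▸ hl)).symm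
  rw [closedWalkCount_eq_card_finsetWalkLength, hcycle, hfree, add_comm,
    Finset.card_filter_add_card_filter_not]

variable {G v}

lemma isRegularOfDegree_of_forall_ncard_neighborSet {k : ℕ}
    (h : ∀ v, (G.neighborSet v).ncard = k) : G.IsRegularOfDegree k := fun v ↦ by
  rw [← h v, ← card_neighborFinset_eq_degree, ← Set.ncard_coe_finset, coe_neighborFinset]

lemma card_filter_mem_edges_eq_two_of_isCycle {p : G.Walk v v} (hp : p.IsCycle)
    [DecidablePred fun w ↦ s(v, w) ∈ p.edges] :
    ((G.neighborFinset v).filter fun w ↦ s(v, w) ∈ p.edges).card = 2 := by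
  rw [← hp.ncard_neighborSet_toSubgraph_eq_two p.start_mem_support, ← Set.ncard_coe_finset]
  congr 1
  ext w
  rw [Finset.mem_coe, Finset.mem_filter, mem_neighborFinset, Subgraph.mem_neighborSet,
    Walk.adj_toSubgraph_iff_mem_edges]
  exact and_iff_right_of_imp fun hw ↦ p.edges_subset_edgeSet hw

lemma basedCycleCount_eq_degree_mul {l m : ℕ}
    (h : ∀ w, G.Adj v w →
      Nat.card {p : G.Walk v v // p.IsCycle ∧ p.length = l ∧ s(v, w) ∈ p.edges} = 2 * m) :
    basedCycleCount G v l = G.degree v * m := by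
  classical
  let cycles : Finset (G.Walk v v) := (G.finsetWalkLength l v v).filter (·.IsCycle)
  have mem_cycles (p : G.Walk v v) : p ∈ cycles ↔ p.IsCycle ∧ p.length = l := by
    rw [Finset.mem_filter, mem_finsetWalkLength_iff, and_comm]
  have hedge : ∀ w ∈ G.neighborFinset v,
      (cycles.bipartiteAbove (fun w p ↦ s(v, w) ∈ p.edges) w).card = 2 * m := fun w hw ↦ by
    rw [← h w ((G.mem_neighborFinset v w).1 hw)]
    exact (Nat.subtype_card _ fun p ↦ by
      rw [Finset.mem_bipartiteAbove, mem_cycles, and_assoc]).symm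
  have hcycle : ∀ p ∈ cycles, ((G.neighborFinset v).bipartiteBelow
      (fun w (p : G.Walk v v) ↦ s(v, w) ∈ p.edges) p).card = 2 := fun p hp ↦
    card_filter_mem_edges_eq_two_of_isCycle ((mem_cycles p).1 hp).1
  have hcount : basedCycleCount G v l = cycles.card := Nat.subtype_card _ mem_cycles
  have hdouble : G.degree v * (2 * m) = cycles.card * 2 :=
    Finset.card_mul_eq_card_mul _ hedge hcycle
  rw [hcount]
  linarith

end LocallyFinite

lemma sq_sum_sub_apply_le {ι R : Type*} [Fintype ι] [CommRing R] [LinearOrder R]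
    [IsStrictOrderedRing R] (f : ι → R) (i : ι) :
    (∑ j, f j - f i) ^ 2 ≤ (Fintype.card ι - 1) * (∑ j, f j ^ 2 - f i ^ 2) := by
  classical
  have hcard : ((Finset.univ.erase i).card : R) = Fintype.card ι - 1 :=
    Finset.cast_card_erase_of_mem (Finset.mem_univ i)
  rw [← hcard, ← Finset.sum_erase_eq_sub (Finset.mem_univ i),
    ← Finset.sum_erase_eq_sub (Finset.mem_univ i)]
  exact sq_sum_le_card_mul_sum_sq

section AdjacencyMatrix

variable {V : Type*} [Fintype V] {G : SimpleGraph V} [DecidableRel G.Adj]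

lemma adjMatrix_pow_apply_self {R : Type*} [Semiring R] [DecidableEq V] (m : ℕ) (v : V) :
    (G.adjMatrix R ^ m) v v = G.closedWalkCount v m := by
  rw [adjMatrix_pow_apply_eq_card_walk, card_set_walk_length_eq,
    closedWalkCount_eq_card_finsetWalkLength]

lemma sum_adjMatrix_pow_apply_of_regular {R : Type*} [Semiring R] [DecidableEq V] {k : ℕ}
    (hreg : G.IsRegularOfDegree k) (m : ℕ) (v : V) :
    ∑ u, (G.adjMatrix R ^ m) v u = (k : R) ^ m := by
  induction m generalizing v with
  | zero => simp [Matrix.one_apply]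
  | succ m ih =>
    simp_rw [pow_succ', adjMatrix_mul_apply]
    rw [Finset.sum_comm]
    simp [ih, hreg v]

lemma sum_adjMatrix_pow_apply_sq {R : Type*} [CommSemiring R] [DecidableEq V] (m : ℕ) (v : V) :
    ∑ u, (G.adjMatrix R ^ m) v u ^ 2 = G.closedWalkCount v (m + m) := by
  have hsymm : (G.adjMatrix R ^ m).IsSymm := G.isSymm_adjMatrix.pow m
  rw [← adjMatrix_pow_apply_self, pow_add, Matrix.mul_apply]
  exact Finset.sum_congr rfl fun u _ ↦ by rw [hsymm.apply v u, sq]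

theorem sq_pow_sub_closedWalkCount_le {k : ℕ} (hreg : G.IsRegularOfDegree k) (m : ℕ) (v : V) :
    ((k : ℤ) ^ m - G.closedWalkCount v m) ^ 2 ≤
      (Fintype.card V - 1) * (G.closedWalkCount v (m + m) - (G.closedWalkCount v m : ℤ) ^ 2) := by
  classical
  simpa only [sum_adjMatrix_pow_apply_of_regular hreg, sum_adjMatrix_pow_apply_sq,
    adjMatrix_pow_apply_self] using sq_sum_sub_apply_le ((G.adjMatrix ℤ ^ m) v) v

end AdjacencyMatrix

lemma nonempty_of_isEGR {V : Type*} {G : SimpleGraph V} {n k g lam : ℕ}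
    (h : G.IsEGR n k g lam) : Nonempty V := by
  obtain ⟨-, -, -, hgirth, -⟩ := h
  obtain ⟨v, -⟩ : ∃ (v : V) (p : G.Walk v v), p.IsCycle ∧ G.egirth = p.length := by
    rw [exists_egirth_eq_length, ← egirth_eq_top, hgirth]
    exact ENat.natCast_ne_top g
  exact ⟨v⟩

theorem egr_even_girth_0mod4_lower_bound_general {V : Type*} [Finite V] (G : SimpleGraph V)
    {k g lam : ℕ} (hg : Even g) (hreg : ∀ u : V, (G.neighborSet u).ncard = k)
    (hgirth : (g : ℕ∞) ≤ G.egirth) (v : V)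
    (hlam : ∀ w : V, G.Adj v w →
      Nat.card {p : G.Walk v v // p.IsCycle ∧ p.length = g ∧ s(v, w) ∈ p.edges} = 2 * lam) :
    (Nat.card V : ℤ) *
        (G.cycleFreeClosedWalkCount v g + k * lam - (G.closedWalkCount v (g / 2) : ℤ) ^ 2) ≥
      (G.cycleFreeClosedWalkCount v g : ℤ) + k * lam + (k : ℤ) ^ g -
        2 * G.closedWalkCount v (g / 2) * (k : ℤ) ^ (g / 2) := by
  classical
  have := Fintype.ofFinite V
  have hdeg : G.IsRegularOfDegree k := isRegularOfDegree_of_forall_ncard_neighborSet hreg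
  have hwalks : G.closedWalkCount v g = G.cycleFreeClosedWalkCount v g + k * lam := by
    rw [closedWalkCount_eq_cycleFree_add_basedCycleCount G v hgirth,
      basedCycleCount_eq_degree_mul hlam, hdeg v]
  obtain ⟨m, rfl⟩ := hg
  have hbound := sq_pow_sub_closedWalkCount_le hdeg m v
  rw [hwalks, ← Nat.card_eq_fintype_card] at hbound
  push_cast at hbound
  rw [show (m + m) / 2 = m by lia]
  linear_combination hbound

/-- Let `k ≥ 3` and let `G` be an `egr(n, k, g, λ)` graph with `g ≡ 0 (mod 4)`.
If every vertex of `G` lies on exactly `c₁` closed walks of length `g/2` and on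
exactly `c` cycle-free closed walks of length `g`, then
`n(c + kλ - c₁²) ≥ c + kλ + k^g - 2c₁k^(g/2)`. -/
theorem egr_even_girth_0mod4_lower_bound (n k g lam c₁ c : ℕ) (hk : 3 ≤ k)
    (hg : g % 4 = 0) {V : Type*} (G : SimpleGraph V) (h : G.IsEGR n k g lam)
    (hc₁ : ∀ v : V, G.closedWalkCount v (g / 2) = c₁)
    (hc : ∀ v : V, G.cycleFreeClosedWalkCount v g = c) :
    (n : ℤ) * (c + k * lam - c₁ ^ 2) ≥
      (c : ℤ) + k * lam + (k : ℤ) ^ g - 2 * c₁ * (k : ℤ) ^ (g / 2) := by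
  obtain ⟨v⟩ := nonempty_of_isEGR h
  obtain ⟨_, rfl, hreg, hgirth, hlam⟩ := h
  simpa only [hc₁, hc] using egr_even_girth_0mod4_lower_bound_general G
    (Nat.even_iff.2 (by lia)) hreg hgirth.ge v (hlam v)
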